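/- Let η > 0, let N ∈ ℕ with N ≥ 1, and let G_0, …, G_{N−1} be symmetric positive semidefinite d×d matrices satisfying 0 ⪯ η·G_t ⪯ (1/2)·I for every t. Define S_0 := log(k/d)·I and S_{t+1} := S_t + η·G_t, and for every t ≥ 0 let Y_t ∈ 𝒴 be the unique minimizer over 𝒴 of Y ↦ r(Y) − ⟨S_t, Y⟩ (so Y_0 = (k/d)·I). Then for every U ∈ 𝒴: (1/N)·∑_{t=0}^{N−1} ⟨G_t, U⟩ ≤ (2/N)·∑_{t=0}^{N−1} ⟨G_t, Y_t⟩ + k·log(d)/(η·N). -/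

import Mathlib

open Finset

/-- The `k`-Fantope: symmetric matrices `Y` with `0 ⪯ Y ⪯ I` and `Tr(Y) = k`. -/
def Fantope (d k : ℕ) : Set (Matrix (Fin d) (Fin d) ℝ) :=
  {Y | Y.PosSemidef ∧ ((1 : Matrix (Fin d) (Fin d) ℝ) - Y).PosSemidef ∧
    Y.trace = (k : ℝ)}

/-- The matrix entropy regularizer `r(Y) = ∑_j (λ_j(Y)·log λ_j(Y) − λ_j(Y))`
(with the convention `0 · log 0 = 0`, as in `Real.log 0 = 0`). -/
noncomputable def matEntropy {d : ℕ} (Y : Matrix (Fin d) (Fin d) ℝ) : ℝ := by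
  classical
  exact if h : Y.IsHermitian then
    ∑ j, (h.eigenvalues j * Real.log (h.eigenvalues j) - h.eigenvalues j)
  else 0

/-- Trace inner product `⟨A, B⟩ = Tr(A·B)` on symmetric matrices. -/
def minner {d : ℕ} (A B : Matrix (Fin d) (Fin d) ℝ) : ℝ := (A * B).trace

/-!
Put `Φ t = min_𝒴 (r - ⟨S_t, ·⟩)`, attained at `Y_t`. The KKT conditions at `Y_t` and a sharpened
form of the Gibbs variational principle show that the objective at any other point `Z` of the
Fantope exceeds `Φ t` by at least `H(Y_t, Z) = ‖√Y_t - √Z‖²`. On the other hand, if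
`0 ⪯ A ⪯ 1/2` and `E = √X - √Z`, the parallelogram identity `(√X + E)² = 2X + 2E² - Z` gives
`⟨A, Z⟩ ≤ 2⟨A, X⟩ + 2⟨A, E²⟩ ≤ 2⟨A, X⟩ + H(X, Z)`. With `A = ηG_t`, `X = Y_t` and `Z = Y_{t+1}`
this yields `Φ t - Φ (t + 1) ≤ 2η⟨G_t, Y_t⟩`. Summing over `t` and comparing `Φ N` with the
objective at `U` bounds the regret by the range of the entropy `r` on the Fantope.
-/

open scoped MatrixOrder Matrix

section SpectralCalculus

variable {n : Type*} [Fintype n] {A B : Matrix n n ℝ}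

theorem trace_mul_nonneg (hA : A.PosSemidef) (hB : B.PosSemidef) : 0 ≤ (A * B).trace := by
  classical
  obtain ⟨C, rfl⟩ := CStarAlgebra.nonneg_iff_eq_star_mul_self.mp hB.nonneg
  rw [← Matrix.mul_assoc, Matrix.trace_mul_comm, ← Matrix.mul_assoc]
  exact (hA.mul_mul_conjTranspose_same C).trace_nonneg

theorem posSemidef_mul_self (hA : A.IsHermitian) : (A * A).PosSemidef := by
  simpa only [hA.eq] using Matrix.posSemidef_conjTranspose_mul_self A

variable [DecidableEq n]

theorem trace_cfc (hA : A.IsHermitian) (f : ℝ → ℝ) :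
    (cfc f A).trace = ∑ i, f (hA.eigenvalues i) := by
  rw [hA.cfc_eq, Matrix.IsHermitian.cfc, Unitary.conjStarAlgAut_apply, Matrix.trace_mul_cycle,
    Unitary.coe_star_mul_self, one_mul, Matrix.trace_diagonal]
  simp only [Function.comp_apply, RCLike.ofReal_real_eq_id, id_eq]

theorem trace_cfc_mul_cfc (hA : A.IsHermitian) (hB : B.IsHermitian) (f g : ℝ → ℝ) :
    (cfc f A * cfc g B).trace =
      ∑ i, ∑ j, ((star hA.eigenvectorUnitary.1 * hB.eigenvectorUnitary.1) i j) ^ 2 *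
        (f (hA.eigenvalues i) * g (hB.eigenvalues j)) := by
  set U := hA.eigenvectorUnitary.1
  set V := hB.eigenvectorUnitary.1
  set a : Matrix n n ℝ := Matrix.diagonal (f ∘ hA.eigenvalues)
  set b : Matrix n n ℝ := Matrix.diagonal (g ∘ hB.eigenvalues)
  have hf : cfc f A = U * a * star U := hA.cfc_eq f
  have hg : cfc g B = V * b * star V := hB.cfc_eq g
  have h_conj : (cfc f A * cfc g B).trace = (a * (star U * V) * (b * (star U * V)ᵀ)).trace := by
    rw [hf, hg, Matrix.mul_assoc, Matrix.mul_assoc, Matrix.trace_mul_comm]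
    simp only [Matrix.mul_assoc, Matrix.transpose_mul, Matrix.star_eq_conjTranspose,
      Matrix.conjTranspose_eq_transpose_of_trivial, Matrix.transpose_transpose]
  rw [h_conj, Matrix.trace]
  refine sum_congr rfl fun i _ => ?_
  rw [Matrix.diag_apply, Matrix.mul_apply]
  refine sum_congr rfl fun j _ => ?_
  simp only [a, b, Matrix.diagonal_mul, Matrix.transpose_apply, Function.comp_apply]
  ring

theorem klein_inequality {ι : Type*} [Fintype ι] (hA : A.IsHermitian) (hB : B.IsHermitian)
    (c : ι → ℝ) (f g : ι → ℝ → ℝ)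
    (h : ∀ x ∈ spectrum ℝ A, ∀ y ∈ spectrum ℝ B, 0 ≤ ∑ k, c k * (f k x * g k y)) :
    0 ≤ ∑ k, c k * (cfc (f k) A * cfc (g k) B).trace := by
  simp only [trace_cfc_mul_cfc hA hB, mul_sum]
  rw [sum_comm]
  refine sum_nonneg fun i _ => ?_
  rw [sum_comm]
  refine sum_nonneg fun j _ => ?_
  simp only [mul_left_comm (c _) (_ ^ 2), ← mul_sum]
  exact mul_nonneg (sq_nonneg _)
    (h _ (hA.eigenvalues_mem_spectrum_real i) _ (hB.eigenvalues_mem_spectrum_real j))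

theorem posSemidef_cfc {f : ℝ → ℝ} (h : ∀ x ∈ spectrum ℝ A, 0 ≤ f x) : (cfc f A).PosSemidef :=
  Matrix.nonneg_iff_posSemidef.mp (cfc_nonneg h)

theorem cfc_sqrt_mul_self (hA : A.PosSemidef) : cfc Real.sqrt A * cfc Real.sqrt A = A := by
  have h_nonneg := spectrum_nonneg_of_nonneg (𝕜 := ℝ) hA.nonneg
  calc cfc Real.sqrt A * cfc Real.sqrt A = cfc (fun x => √x * √x) A := (cfc_mul ..).symm
    _ = cfc (fun x => x) A := cfc_congr fun x hx => Real.mul_self_sqrt (h_nonneg hx)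
    _ = A := cfc_id' ℝ A hA.isHermitian

end SpectralCalculus

section Hellinger

variable {n : Type*} [Fintype n] [DecidableEq n] {A X Y : Matrix n n ℝ}

/-- The squared Hellinger distance `‖√X - √Y‖²` (Frobenius norm) between positive semidefinite
matrices, in terms of which the entropy objective grows away from its minimizer. -/
noncomputable def sqHellinger (X Y : Matrix n n ℝ) : ℝ :=
  ((cfc Real.sqrt X - cfc Real.sqrt Y) * (cfc Real.sqrt X - cfc Real.sqrt Y)).trace

theorem sqHellinger_eq (hX : X.PosSemidef) (hY : Y.PosSemidef) :
    sqHellinger X Y = X.trace + Y.trace - 2 * (cfc Real.sqrt Y * cfc Real.sqrt X).trace := by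
  rw [sqHellinger, sub_mul, mul_sub, mul_sub, cfc_sqrt_mul_self hX, cfc_sqrt_mul_self hY,
    Matrix.trace_sub, Matrix.trace_sub, Matrix.trace_sub,
    Matrix.trace_mul_comm (cfc Real.sqrt X) (cfc Real.sqrt Y)]
  ring

theorem isHermitian_cfc_sqrt_sub (X Y : Matrix n n ℝ) :
    (cfc Real.sqrt X - cfc Real.sqrt Y).IsHermitian :=
  (cfc_predicate Real.sqrt X).sub (cfc_predicate Real.sqrt Y)

theorem sqHellinger_nonneg (X Y : Matrix n n ℝ) : 0 ≤ sqHellinger X Y :=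
  (posSemidef_mul_self (isHermitian_cfc_sqrt_sub X Y)).trace_nonneg

theorem eq_of_sqHellinger_nonpos (hX : X.PosSemidef) (hY : Y.PosSemidef)
    (h : sqHellinger X Y ≤ 0) : X = Y := by
  have h_trace := le_antisymm h (sqHellinger_nonneg X Y)
  rw [sqHellinger] at h_trace
  nth_rw 1 [← (isHermitian_cfc_sqrt_sub X Y).eq] at h_trace
  have h_sqrt := sub_eq_zero.mp (Matrix.trace_conjTranspose_mul_self_eq_zero_iff.mp h_trace)
  rw [← cfc_sqrt_mul_self hX, h_sqrt, cfc_sqrt_mul_self hY]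

theorem trace_mul_le_sqHellinger_add (hA : A.PosSemidef)
    (hA_le : (((1 : ℝ) / 2) • (1 : Matrix n n ℝ) - A).PosSemidef)
    (hX : X.PosSemidef) (hY : Y.PosSemidef) :
    (A * Y).trace ≤ sqHellinger X Y + 2 * (A * X).trace := by
  obtain ⟨P, hP⟩ : ∃ P, P = cfc Real.sqrt X := ⟨_, rfl⟩
  obtain ⟨E, hE⟩ : ∃ E, E = cfc Real.sqrt X - cfc Real.sqrt Y := ⟨_, rfl⟩
  have hP_herm : P.IsHermitian := hP ▸ cfc_predicate Real.sqrt X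
  have hE_herm : E.IsHermitian := hE ▸ isHermitian_cfc_sqrt_sub X Y
  have h_parallelogram : (P + E) * (P + E) = (2 : ℝ) • X + (2 : ℝ) • (E * E) - Y := by
    have hQ : cfc Real.sqrt Y = P - E := by rw [hP, hE, sub_sub_cancel]
    rw [← cfc_sqrt_mul_self hX, ← cfc_sqrt_mul_self hY, ← hP, hQ, two_smul, two_smul]
    noncomm_ring
  have h_sum := trace_mul_nonneg hA (posSemidef_mul_self (hP_herm.add hE_herm))
  have h_half := trace_mul_nonneg hA_le (posSemidef_mul_self hE_herm)
  simp only [h_parallelogram, mul_add, mul_sub, mul_smul_comm, Matrix.trace_add, Matrix.trace_sub,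
    Matrix.trace_smul, smul_eq_mul] at h_sum
  simp only [sub_mul, smul_mul_assoc, one_mul, Matrix.trace_sub, Matrix.trace_smul,
    smul_eq_mul] at h_half
  rw [sqHellinger, ← hE]
  linarith

end Hellinger

section Entropy

theorem hellinger_le_relEntropy_exp {x : ℝ} (hx : 0 ≤ x) (y : ℝ) :
    0 ≤ (x * Real.log x - x) - x * y - x + 2 * (√x * √(Real.exp y)) := by
  rcases hx.eq_or_lt with rfl | hx
  · simp
  have h_sqrt : 0 < √x := Real.sqrt_pos.mpr hx
  have h_log := Real.log_le_sub_one_of_pos (div_pos (Real.exp_pos (y / 2)) h_sqrt)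
  rw [Real.log_div (Real.exp_pos _).ne' h_sqrt.ne', Real.log_exp, Real.log_sqrt hx.le] at h_log
  have h_mul := mul_le_mul_of_nonneg_left h_log hx.le
  have h_ratio : x * (Real.exp (y / 2) / √x) = √x * Real.exp (y / 2) := by
    rw [mul_div_left_comm, Real.div_sqrt, mul_comm]
  rw [← Real.exp_half]
  linarith

variable {d : ℕ} {L X Y : Matrix (Fin d) (Fin d) ℝ}

theorem matEntropy_eq_trace_cfc (hY : Y.IsHermitian) :
    matEntropy Y = (cfc (fun x => x * Real.log x - x) Y).trace := by
  rw [matEntropy, dif_pos hY, trace_cfc hY]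

theorem matEntropy_cfc_exp (hL : L.IsHermitian) :
    matEntropy (cfc Real.exp L) = minner L (cfc Real.exp L) - (cfc Real.exp L).trace := by
  have hL' : IsSelfAdjoint L := hL
  have h_comp : cfc (fun x => x * Real.log x - x) (cfc Real.exp L) =
      L * cfc Real.exp L - cfc Real.exp L :=
    calc cfc (fun x => x * Real.log x - x) (cfc Real.exp L)
        = cfc (fun y => Real.exp y * Real.log (Real.exp y) - Real.exp y) L :=
          (cfc_comp' (fun x => x * Real.log x - x) Real.exp L
            (Real.continuous_mul_log.sub continuous_id).continuousOn).symm
      _ = cfc (fun y => y * Real.exp y - Real.exp y) L := by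
          simp only [Real.log_exp, mul_comm]
      _ = L * cfc Real.exp L - cfc Real.exp L := by
          rw [cfc_sub .., cfc_mul .., cfc_id' ℝ L]
  rw [matEntropy_eq_trace_cfc IsSelfAdjoint.cfc.isHermitian, h_comp, Matrix.trace_sub, minner]

/-- A sharpening of the Gibbs variational principle `⟨L, Y⟩ - r(Y) ≤ Tr (exp L)`. -/
theorem sqHellinger_cfc_exp_le (hL : L.IsHermitian) (hY : Y.PosSemidef) :
    sqHellinger (cfc Real.exp L) Y ≤ matEntropy Y - minner L Y + (cfc Real.exp L).trace := by
  have h_klein := klein_inequality hY.isHermitian hL ![1, -1, -1, 2]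
    ![fun x => x * Real.log x - x, fun x => x, fun x => x, Real.sqrt]
    ![fun _ => 1, fun y => y, fun _ => 1, fun y => √(Real.exp y)]
    fun x hx y _ => by
      simpa [Fin.sum_univ_four, ← sub_eq_add_neg] using
        hellinger_le_relEntropy_exp (spectrum_nonneg_of_nonneg hY.nonneg hx) y
  have h_sqrt : cfc (fun y => √(Real.exp y)) L = cfc Real.sqrt (cfc Real.exp L) :=
    cfc_comp' Real.sqrt Real.exp L (ha := hL.isSelfAdjoint)
  rw [Fin.sum_univ_four] at h_klein
  simp only [Matrix.cons_val, h_sqrt, cfc_const_one ℝ L hL.isSelfAdjoint,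
    cfc_id' ℝ L hL.isSelfAdjoint, cfc_id' ℝ Y hY.isHermitian.isSelfAdjoint, mul_one] at h_klein
  rw [sqHellinger_eq (posSemidef_cfc fun x _ => (Real.exp_pos x).le) hY,
    matEntropy_eq_trace_cfc hY.isHermitian, minner, Matrix.trace_mul_comm L]
  linarith

theorem mul_trace_sub_le_matEntropy (hY : Y.PosSemidef) (c : ℝ) :
    c * Y.trace - d * Real.exp c ≤ matEntropy Y := by
  have h_exp : cfc Real.exp (c • (1 : Matrix (Fin d) (Fin d) ℝ)) = Real.exp c • 1 := by
    simpa only [Algebra.algebraMap_eq_smul_one] using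
      cfc_algebraMap (A := Matrix (Fin d) (Fin d) ℝ) c Real.exp
  have h_gibbs := sqHellinger_cfc_exp_le (L := c • 1) (Matrix.isHermitian_one.smul rfl) hY
  rw [h_exp, minner, smul_one_mul, Matrix.trace_smul, Matrix.trace_smul, Matrix.trace_one,
    Fintype.card_fin, smul_eq_mul, smul_eq_mul] at h_gibbs
  linarith [sqHellinger_nonneg (Real.exp c • 1) Y]

end Entropy

section Fantope

variable {d k : ℕ} {S X Y : Matrix (Fin d) (Fin d) ℝ}

theorem le_of_mem_fantope (hY : Y ∈ Fantope d k) : k ≤ d := by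
  have h_trace := hY.2.1.trace_nonneg
  rw [Matrix.trace_sub, Matrix.trace_one, Fintype.card_fin, hY.2.2, sub_nonneg] at h_trace
  exact_mod_cast h_trace

theorem matEntropy_le_neg_of_mem_fantope (hY : Y ∈ Fantope d k) : matEntropy Y ≤ -k := by
  obtain ⟨h_nonneg, h_le, h_trace⟩ := hY
  have hY' : IsSelfAdjoint Y := h_nonneg.isHermitian
  have h_spec (x : ℝ) (hx : x ∈ spectrum ℝ Y) : 0 ≤ x ∧ x ≤ 1 :=
    ⟨spectrum_nonneg_of_nonneg h_nonneg.nonneg hx,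
      (cfc_le_one_iff (fun x => x) Y).mp (by rwa [cfc_id' ℝ Y, Matrix.le_iff]) x hx⟩
  rw [matEntropy_eq_trace_cfc hY', trace_cfc hY', ← h_trace,
    hY'.isHermitian.trace_eq_sum_eigenvalues, ← sum_neg_distrib]
  refine sum_le_sum fun i _ => ?_
  have := h_spec _ (hY'.isHermitian.eigenvalues_mem_spectrum_real i)
  simpa using Real.mul_log_nonpos this.1 this.2

theorem le_matEntropy_of_mem_fantope (hk : 0 < k) (hY : Y ∈ Fantope d k) :
    -k - k * Real.log (d / k) ≤ matEntropy Y := by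
  have hk' : (0 : ℝ) < k := by exact_mod_cast hk
  have hd : (0 : ℝ) < d := by exact_mod_cast hk.trans_le (le_of_mem_fantope hY)
  have h_lower := mul_trace_sub_le_matEntropy hY.1 (-Real.log (d / k))
  rw [hY.2.2, Real.exp_neg, Real.exp_log (div_pos hd hk'), inv_div, mul_div_cancel₀ _ hd.ne']
    at h_lower
  linarith

theorem exists_sum_exp_min_eq {ι : Type*} [Fintype ι] (s : ι → ℝ) {c : ℝ} (hc : 0 < c)
    (hc_le : c ≤ Fintype.card ι) : ∃ τ : ℝ, ∑ i, Real.exp (min 0 (s i - τ)) = c := by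
  have h_card : (0 : ℝ) < Fintype.card ι := hc.trans_le hc_le
  have : Nonempty ι := Fintype.card_pos_iff.mp (by exact_mod_cast h_card)
  obtain ⟨i_min, h_min⟩ := Finite.exists_min s
  obtain ⟨i_max, h_max⟩ := Finite.exists_max s
  refine mem_range_of_exists_le_of_exists_ge
    (f := fun τ : ℝ => ∑ i, Real.exp (min 0 (s i - τ))) (by fun_prop)
    ⟨s i_max - Real.log (c / Fintype.card ι), ?_⟩ ⟨s i_min, ?_⟩
  · calc ∑ i, Real.exp (min 0 (s i - (s i_max - Real.log (c / Fintype.card ι))))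
        ≤ ∑ _i : ι, Real.exp (Real.log (c / Fintype.card ι)) := by
          gcongr with i
          exact (min_le_right _ _).trans (by linarith [h_max i])
      _ = c := by
          rw [Real.exp_log (by positivity), sum_const, card_univ, nsmul_eq_mul,
            mul_div_cancel₀ _ h_card.ne']
  · calc c ≤ ∑ _i : ι, Real.exp 0 := by simpa using hc_le
      _ ≤ ∑ i, Real.exp (min 0 (s i - s i_min)) := by
          gcongr with i
          exact (min_eq_left (sub_nonneg.mpr (h_min i))).ge

/-- `D` and `τ` are the multipliers of the constraints `Y ⪯ 1` and `Tr Y = k`, and `h_slack` is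
complementary slackness `D * (1 - X) = 0` at `X = exp L`. -/
theorem entropy_growth_of_kkt {L D : Matrix (Fin d) (Fin d) ℝ} {τ : ℝ} (hL : L.IsHermitian)
    (hD : D.PosSemidef) (hS : S = L + D + τ • 1) (h_slack : D * cfc Real.exp L = D)
    (hX : cfc Real.exp L ∈ Fantope d k) (hY : Y ∈ Fantope d k) :
    matEntropy (cfc Real.exp L) - minner S (cfc Real.exp L) + sqHellinger (cfc Real.exp L) Y ≤
      matEntropy Y - minner S Y := by
  have h_minner (Z : Matrix (Fin d) (Fin d) ℝ) (hZ : Z ∈ Fantope d k) :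
      minner S Z = minner L Z + (D * Z).trace + τ * k := by
    rw [hS, minner, minner, add_mul, add_mul, smul_one_mul, Matrix.trace_add, Matrix.trace_add,
      Matrix.trace_smul, hZ.2.2, smul_eq_mul]
  have h_dual := trace_mul_nonneg hD hY.2.1
  rw [mul_sub, mul_one, Matrix.trace_sub, sub_nonneg] at h_dual
  rw [h_minner _ hX, h_minner _ hY, h_slack, matEntropy_cfc_exp hL]
  linarith [sqHellinger_cfc_exp_le hL hY.1]

theorem exists_entropy_growth (hk : 0 < k) (hkd : k ≤ d) (hS : S.IsHermitian) :
    ∃ X ∈ Fantope d k, ∀ Y ∈ Fantope d k,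
      matEntropy X - minner S X + sqHellinger X Y ≤ matEntropy Y - minner S Y := by
  have hS' : IsSelfAdjoint S := hS
  obtain ⟨τ, hτ⟩ := exists_sum_exp_min_eq hS.eigenvalues (c := k) (by exact_mod_cast hk)
    (by simpa using hkd)
  set L := cfc (fun x => min 0 (x - τ)) S with hL
  set D := cfc (fun x => max 0 (x - τ)) S with hD
  have h_exp : cfc Real.exp L = cfc (fun x => Real.exp (min 0 (x - τ))) S :=
    (cfc_comp' Real.exp (fun x => min 0 (x - τ)) S).symm
  have h_decomp : S = L + D + τ • 1 := by
    rw [hL, hD, ← cfc_add .., ← Algebra.algebraMap_eq_smul_one, ← cfc_add_const ..]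
    simp only [min_add_max, zero_add, sub_add_cancel, cfc_id' ℝ S]
  have h_slack : D * cfc Real.exp L = D := by
    rw [h_exp, hD, ← cfc_mul ..]
    congr! 2 with x
    rcases le_total 0 (x - τ) with hx | hx <;> simp [hx]
  have h_mem : cfc Real.exp L ∈ Fantope d k := by
    refine ⟨posSemidef_cfc fun x _ => (Real.exp_pos x).le, ?_, by rw [h_exp, trace_cfc hS, hτ]⟩
    rw [h_exp]
    exact Matrix.le_iff.mp (cfc_le_one _ _ fun x _ => Real.exp_le_one_iff.mpr (min_le_left _ _))
  have hL_herm : L.IsHermitian := IsSelfAdjoint.cfc.isHermitian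
  have hD_nonneg : D.PosSemidef := posSemidef_cfc fun x _ => le_max_left _ _
  exact ⟨cfc Real.exp L, h_mem, fun Y hY =>
    entropy_growth_of_kkt hL_herm hD_nonneg h_decomp h_slack h_mem hY⟩

theorem entropy_growth_of_isMinOn (hk : 0 < k) (hS : S.IsHermitian)
    (hX : X ∈ Fantope d k)
    (h_min : IsMinOn (fun Z => matEntropy Z - minner S Z) (Fantope d k) X)
    (hY : Y ∈ Fantope d k) :
    matEntropy X - minner S X + sqHellinger X Y ≤ matEntropy Y - minner S Y := by
  obtain ⟨X₀, hX₀, h_growth⟩ := exists_entropy_growth hk (le_of_mem_fantope hX) hS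
  have h_le := isMinOn_iff.mp h_min X₀ hX₀
  have h_eq : X₀ = X := eq_of_sqHellinger_nonpos hX₀.1 hX.1 (by linarith [h_growth X hX])
  exact h_eq ▸ h_growth Y hY

end Fantope

section Regret

variable {d k : ℕ}

theorem entropy_step_le (hk : 0 < k) {S A X Y : Matrix (Fin d) (Fin d) ℝ} (hS : S.IsHermitian)
    (hA : A.PosSemidef)
    (hA_le : (((1 : ℝ) / 2) • (1 : Matrix (Fin d) (Fin d) ℝ) - A).PosSemidef)
    (hX : X ∈ Fantope d k)
    (h_min : IsMinOn (fun Z => matEntropy Z - minner S Z) (Fantope d k) X)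
    (hY : Y ∈ Fantope d k) :
    matEntropy X - minner S X - 2 * minner A X ≤ matEntropy Y - minner (S + A) Y := by
  have h_growth := entropy_growth_of_isMinOn hk hS hX h_min hY
  have h_stable := trace_mul_le_sqHellinger_add hA hA_le hX.1 hY.1
  simp only [minner, add_mul, Matrix.trace_add] at h_growth ⊢
  linarith

theorem sum_minner_le_of_ftrl (hk : 0 < k) {N : ℕ} {A S Y : ℕ → Matrix (Fin d) (Fin d) ℝ}
    (hA : ∀ t < N, (A t).PosSemidef)
    (hA_le : ∀ t < N, (((1 : ℝ) / 2) • (1 : Matrix (Fin d) (Fin d) ℝ) - A t).PosSemidef)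
    (hS₀ : (S 0).IsHermitian) (hS_succ : ∀ t, S (t + 1) = S t + A t)
    (hY : ∀ t, Y t ∈ Fantope d k)
    (h_min : ∀ t, IsMinOn (fun Z => matEntropy Z - minner (S t) Z) (Fantope d k) (Y t))
    {U : Matrix (Fin d) (Fin d) ℝ} (hU : U ∈ Fantope d k) :
    ∑ t ∈ range N, minner (A t) U ≤ 2 * ∑ t ∈ range N, minner (A t) (Y t) +
      ((matEntropy U - minner (S 0) U) - (matEntropy (Y 0) - minner (S 0) (Y 0))) := by
  have hS_eq (t : ℕ) : S t = S 0 + ∑ i ∈ range t, A i := by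
    simpa only [hS_succ, add_sub_cancel_left] using eq_sum_range_sub S t
  have hS (t : ℕ) (ht : t < N) : (S t).IsHermitian := by
    rw [hS_eq]
    exact hS₀.add (Matrix.posSemidef_sum _ fun i hi =>
      hA i ((mem_range.mp hi).trans ht)).isHermitian
  have h_step (t : ℕ) (ht : t < N) :
      (matEntropy (Y t) - minner (S t) (Y t)) -
        (matEntropy (Y (t + 1)) - minner (S (t + 1)) (Y (t + 1))) ≤ 2 * minner (A t) (Y t) := by
    rw [hS_succ]
    linarith [entropy_step_le hk (hS t ht) (hA t ht) (hA_le t ht) (hY t) (h_min t) (hY (t + 1))]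
  have h_potential := sum_le_sum fun t ht => h_step t (mem_range.mp ht)
  rw [sum_range_sub', ← mul_sum] at h_potential
  have h_final := isMinOn_iff.mp (h_min N) U hU
  have h_comparator : minner (S N) U = minner (S 0) U + ∑ t ∈ range N, minner (A t) U := by
    simp only [hS_eq N, minner, add_mul, sum_mul, Matrix.trace_add, Matrix.trace_sum]
  linarith

theorem kfmmw_regret_general (hk : 0 < k) {η : ℝ} (hη : 0 < η) {N : ℕ} (hN : 0 < N)
    {G S Y : ℕ → Matrix (Fin d) (Fin d) ℝ} (hG : ∀ t < N, (G t).PosSemidef)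
    (hG_le : ∀ t < N, (((1 : ℝ) / 2) • (1 : Matrix (Fin d) (Fin d) ℝ) - η • G t).PosSemidef)
    {c : ℝ} (hS₀ : S 0 = c • (1 : Matrix (Fin d) (Fin d) ℝ))
    (hS_succ : ∀ t, S (t + 1) = S t + η • G t) (hY : ∀ t, Y t ∈ Fantope d k)
    (h_min : ∀ t, IsMinOn (fun Z => matEntropy Z - minner (S t) Z) (Fantope d k) (Y t))
    {U : Matrix (Fin d) (Fin d) ℝ} (hU : U ∈ Fantope d k) :
    (1 / (N : ℝ)) * ∑ t ∈ range N, minner (G t) U ≤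
      (2 / (N : ℝ)) * ∑ t ∈ range N, minner (G t) (Y t) + k * Real.log (d / k) / (η * N) := by
  have h_init (Z : Matrix (Fin d) (Fin d) ℝ) (hZ : Z ∈ Fantope d k) : minner (S 0) Z = c * k := by
    rw [hS₀, minner, smul_one_mul, Matrix.trace_smul, hZ.2.2, smul_eq_mul]
  have h_smul (t : ℕ) (Z : Matrix (Fin d) (Fin d) ℝ) : minner (η • G t) Z = η * minner (G t) Z := by
    rw [minner, minner, smul_mul_assoc, Matrix.trace_smul, smul_eq_mul]
  have h_ftrl := sum_minner_le_of_ftrl hk (fun t ht => (hG t ht).smul hη.le) hG_le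
    (hS₀ ▸ Matrix.isHermitian_one.smul rfl) hS_succ hY h_min hU
  simp only [h_init U hU, h_init _ (hY 0), h_smul, ← mul_sum] at h_ftrl
  have h_entropy := matEntropy_le_neg_of_mem_fantope hU
  have h_entropy₀ := le_matEntropy_of_mem_fantope hk (hY 0)
  have h_scaled : η * ∑ t ∈ range N, minner (G t) U ≤
      2 * (η * ∑ t ∈ range N, minner (G t) (Y t)) + k * Real.log (d / k) := by linarith
  calc (1 / (N : ℝ)) * ∑ t ∈ range N, minner (G t) U
      = (η * ∑ t ∈ range N, minner (G t) U) / (η * N) := by field_simp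
    _ ≤ (2 * (η * ∑ t ∈ range N, minner (G t) (Y t)) + k * Real.log (d / k)) / (η * N) :=
        div_le_div_of_nonneg_right h_scaled (by positivity)
    _ = (2 / (N : ℝ)) * ∑ t ∈ range N, minner (G t) (Y t) +
          k * Real.log (d / k) / (η * N) := by field_simp

end Regret

/-- Regret bound for the Ky Fan matrix multiplicative weights procedure. -/
theorem kfmmw_regret {d k : ℕ} (hd : 1 ≤ d) (hk1 : 1 ≤ k) (hkd : k ≤ d)
    (η : ℝ) (hη : 0 < η) (N : ℕ) (hN : 1 ≤ N)
    (G : ℕ → Matrix (Fin d) (Fin d) ℝ)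
    (hGpsd : ∀ t, t < N → (G t).PosSemidef)
    (hGub : ∀ t, t < N →
      (((1 : ℝ) / 2) • (1 : Matrix (Fin d) (Fin d) ℝ) - η • G t).PosSemidef)
    (S : ℕ → Matrix (Fin d) (Fin d) ℝ)
    (hS0 : S 0 = Real.log ((k : ℝ) / (d : ℝ)) • (1 : Matrix (Fin d) (Fin d) ℝ))
    (hSrec : ∀ t, S (t + 1) = S t + η • G t)
    (Y : ℕ → Matrix (Fin d) (Fin d) ℝ)
    (hYmem : ∀ t, Y t ∈ Fantope d k)
    (hYmin : ∀ t, ∀ Z ∈ Fantope d k,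
      matEntropy (Y t) - minner (S t) (Y t) ≤ matEntropy Z - minner (S t) Z) :
    ∀ U ∈ Fantope d k,
      (1 / (N : ℝ)) * ∑ t ∈ Finset.range N, minner (G t) U ≤
        (2 / (N : ℝ)) * ∑ t ∈ Finset.range N, minner (G t) (Y t) +
          (k : ℝ) * Real.log d / (η * N) := by
  intro U hU
  refine (kfmmw_regret_general hk1 hη hN hGpsd hGub hS0 hSrec hYmem
    (fun t => isMinOn_iff.mpr (hYmin t)) hU).trans ?_
  have hk : (1 : ℝ) ≤ k := by exact_mod_cast hk1
  gcongr
  exact div_le_self (Nat.cast_nonneg d) hk
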